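/- (Pointwise differential privacy via liftings.) Let B be a countable set, D a set with adjacency relation ∼, and A : D → Δ(B). Then A is ε-differentially private with respect to ∼ if and only if for every b ∈ B and every pair d1 ∼ d2, the distributions A(d1) and A(d2) are related by the ε-approximate lifting of the relation Ψ_b = {(x1, x2) ∈ B × B | x1 = b ⟹ x2 = b}. -/

import Mathlib

open scoped BigOperators

noncomputable section

/-- Mass that a (sub)distribution assigns to a set of outcomes. -/
def mass {A : Type*} (μ : A → ℝ) (E : Set A) : ℝ := ∑' a : E, μ a

/-- The ε-divergence `Δ_ε(μ1, μ2) = sup_{E ⊆ A} (μ1(E) − exp(ε)·μ2(E))`. -/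
def eDiv {A : Type*} (ε : ℝ) (μ1 μ2 : A → ℝ) : ℝ :=
  ⨆ E : Set A, (mass μ1 E - Real.exp ε * mass μ2 E)

/-- `μ` is a probability distribution: pointwise nonnegative with total mass 1. -/
def IsProb {A : Type*} (μ : A → ℝ) : Prop :=
  (∀ a, 0 ≤ μ a) ∧ (∑' a, μ a) = 1

/-- `μ` is a subdistribution: pointwise nonnegative, summable, with total mass at most 1. -/
def IsSubProb {A : Type*} (μ : A → ℝ) : Prop :=
  (∀ a, 0 ≤ μ a) ∧ Summable μ ∧ (∑' a, μ a) ≤ 1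

/-- ε-approximate lifting `μ1 (Ψ)^ε μ2` of a relation `Ψ` between two
probability distributions. -/
def Lifting {A B : Type*} (ε : ℝ) (Ψ : A → B → Prop) (μ1 : A → ℝ) (μ2 : B → ℝ) : Prop :=
  ∃ μL μR : A × B → ℝ, IsProb μL ∧ IsProb μR ∧
    (∀ a, (∑' b, μL (a, b)) = μ1 a) ∧
    (∀ b, (∑' a, μR (a, b)) = μ2 b) ∧
    (∀ p : A × B, (0 < μL p ∨ 0 < μR p) → Ψ p.1 p.2) ∧
    eDiv ε μL μR ≤ 0

/-- `A` is ε-differentially private w.r.t. the adjacency relation `adj`. -/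
def DP {D O : Type*} (ε : ℝ) (adj : D → D → Prop) (A : D → O → ℝ) : Prop :=
  ∀ d1 d2, adj d1 d2 → ∀ o, A d1 o ≤ Real.exp ε * A d2 o

/-- Monadic bind of distributions: `(bind μ f)(b) = Σ_a μ(a)·f(a)(b)`. -/
def pbind {A B : Type*} (μ : A → ℝ) (f : A → B → ℝ) : B → ℝ :=
  fun b => ∑' a, μ a * f a b

/-- Dirac (point-mass) distribution at `a`. -/
def punit {A : Type*} [DecidableEq A] (a : A) : A → ℝ :=
  fun x => if x = a then 1 else 0

/-- Pushforward of a distribution along `g`: `(map g μ)(b) = Σ_{a : g(a)=b} μ(a)`. -/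
def pmap {A B : Type*} (g : A → B) (μ : A → ℝ) : B → ℝ :=
  fun b => ∑' a : {a // g a = b}, μ (a : A)

/-- Discrete Laplace distribution with mean `v` and (inverse scale) parameter `ε`:
`dLap(v, ε)(z) = ((exp ε − 1)/(exp ε + 1))·exp(−ε·|z − v|)`. -/
def dLap (v : ℤ) (ε : ℝ) : ℤ → ℝ :=
  fun z => ((Real.exp ε - 1) / (Real.exp ε + 1)) * Real.exp (-ε * ((|z - v| : ℤ) : ℝ))

end

/-!
A lifting of `Ψ_b` puts all the left mass of the row of `b` on the single pair `(b, b)`, where the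
`ε`-divergence bound compares it with right mass lying in the column of `b`. Conversely, since each
`Ψ_b` is reflexive, pushing both distributions forward along the diagonal gives witnesses whose
divergence is nonpositive exactly when the distributions satisfy the pointwise bound.
-/

section Divergence

variable {A : Type*} {μ ν : A → ℝ} {ε : ℝ}

theorem bddAbove_range_mass (hμ : Summable μ) : BddAbove (Set.range (mass μ)) := by
  refine ⟨∑' a, |μ a|, ?_⟩
  rintro _ ⟨E, rfl⟩
  calc mass μ E ≤ mass (fun a => |μ a|) E :=
        (hμ.subtype E).tsum_le_tsum (fun a => le_abs_self (μ a)) (hμ.abs.subtype E)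
    _ ≤ ∑' a, |μ a| := hμ.abs.tsum_subtype_le _ E fun a => abs_nonneg (μ a)

theorem iSup_mass_nonpos_iff (hμ : Summable μ) : ⨆ E, mass μ E ≤ 0 ↔ ∀ a, μ a ≤ 0 := by
  rw [ciSup_le_iff (bddAbove_range_mass hμ)]
  refine ⟨fun h a => ?_, fun h E => tsum_nonpos fun a => h a⟩
  simpa only [mass, tsum_singleton] using h {a}

theorem eDiv_eq_iSup_mass (hμ : Summable μ) (hν : Summable ν) :
    eDiv ε μ ν = ⨆ E, mass (fun a => μ a - Real.exp ε * ν a) E := by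
  refine iSup_congr fun E => ?_
  simp only [mass, ← tsum_mul_left]
  exact ((hμ.subtype E).tsum_sub ((hν.subtype E).mul_left _)).symm

theorem eDiv_nonpos_iff (hμ : Summable μ) (hν : Summable ν) :
    eDiv ε μ ν ≤ 0 ↔ ∀ a, μ a ≤ Real.exp ε * ν a := by
  simp only [eDiv_eq_iSup_mass hμ hν, iSup_mass_nonpos_iff (hμ.sub (hν.mul_left _)), sub_nonpos]

end Divergence

theorem IsProb.summable {A : Type*} {μ : A → ℝ} (hμ : IsProb μ) : Summable μ := by
  by_contra h
  exact zero_ne_one ((tsum_eq_zero_of_not_summable h).symm.trans hμ.2)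

section Pushforward

variable {A B : Type*} {μ : A → ℝ} {g : A → B}

theorem IsProb.pmap (hμ : IsProb μ) (g : A → B) : IsProb (pmap g μ) :=
  ⟨fun _ => tsum_nonneg fun a => hμ.1 a,
    (hμ.summable.hasSum.tsum_fiberwise g).tsum_eq.trans hμ.2⟩

theorem pmap_eq_zero {b : B} (hb : ∀ a, g a ≠ b) : pmap g μ b = 0 :=
  have : IsEmpty {a // g a = b} := Subtype.isEmpty_of_false hb
  tsum_empty

theorem pmap_apply_of_injective (hg : Function.Injective g) (a : A) : pmap g μ (g a) = μ a := by
  let _ : Unique {x // g x = g a} := ⟨⟨⟨a, rfl⟩⟩, fun x => Subtype.ext (hg x.2)⟩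
  exact (hasSum_unique fun x : {x // g x = g a} => μ x).tsum_eq

theorem pmap_le_mul_pmap {ν : A → ℝ} {c : ℝ} (hμ : Summable μ) (hν : Summable ν)
    (h : ∀ a, μ a ≤ c * ν a) (g : A → B) (b : B) : pmap g μ b ≤ c * pmap g ν b := by
  simp only [pmap, ← tsum_mul_left]
  exact (hμ.subtype _).tsum_le_tsum (fun a => h a) ((hν.subtype _).mul_left c)

theorem pmap_diag_of_ne {a b : A} (hab : a ≠ b) : pmap Function.diag μ (a, b) = 0 :=
  pmap_eq_zero fun _ hx => hab ((congrArg Prod.fst hx).symm.trans (congrArg Prod.snd hx))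

theorem tsum_pmap_diag_fst (μ : A → ℝ) (a : A) : ∑' b, pmap Function.diag μ (a, b) = μ a :=
  (tsum_eq_single a fun _ hb => pmap_diag_of_ne hb.symm).trans
    (pmap_apply_of_injective Function.diag_injective a)

theorem tsum_pmap_diag_snd (μ : A → ℝ) (b : A) : ∑' a, pmap Function.diag μ (a, b) = μ b :=
  (tsum_eq_single b fun _ ha => pmap_diag_of_ne ha).trans
    (pmap_apply_of_injective Function.diag_injective b)

end Pushforward

section Lifting

variable {A B : Type*} {ε : ℝ}

theorem Lifting.apply_le {Ψ : A → B → Prop} {μ : A → ℝ} {ν : B → ℝ} {a : A} {b : B}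
    (h : Lifting ε Ψ μ ν) (hab : ∀ y, Ψ a y → y = b) : μ a ≤ Real.exp ε * ν b := by
  obtain ⟨μL, μR, hL, hR, hfst, hsnd, hsupp, hdiv⟩ := h
  have row_eq_zero : ∀ y ≠ b, μL (a, y) = 0 := fun y hy =>
    le_antisymm (not_lt.1 fun hpos => hy (hab y (hsupp (a, y) (.inl hpos)))) (hL.1 _)
  have column_summable : Summable fun x => μR (x, b) :=
    hR.summable.comp_injective (Prod.mk_left_injective b)
  calc μ a = ∑' y, μL (a, y) := (hfst a).symm
    _ = μL (a, b) := tsum_eq_single b row_eq_zero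
    _ ≤ Real.exp ε * μR (a, b) := (eDiv_nonpos_iff hL.summable hR.summable).1 hdiv (a, b)
    _ ≤ Real.exp ε * ∑' x, μR (x, b) := by
      gcongr
      exact column_summable.le_tsum a fun x _ => hR.1 (x, b)
    _ = Real.exp ε * ν b := by rw [hsnd b]

theorem lifting_of_forall_le {Ψ : A → A → Prop} {μ ν : A → ℝ} (hΨ : ∀ a, Ψ a a)
    (hμ : IsProb μ) (hν : IsProb ν) (h : ∀ a, μ a ≤ Real.exp ε * ν a) : Lifting ε Ψ μ ν := by
  have hL := hμ.pmap Function.diag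
  have hR := hν.pmap Function.diag
  refine ⟨_, _, hL, hR, tsum_pmap_diag_fst μ, tsum_pmap_diag_snd ν, ?_, ?_⟩
  · rintro ⟨a, b⟩ hpos
    obtain rfl : a = b := by
      by_contra hab
      simp only [pmap_diag_of_ne hab, lt_irrefl, or_self] at hpos
    exact hΨ a
  · exact (eDiv_nonpos_iff hL.summable hR.summable).2
      (pmap_le_mul_pmap hμ.summable hν.summable h Function.diag)

end Lifting

theorem pointwise_dp_iff_lifting_general {D B : Type*} (ε : ℝ) (adj : D → D → Prop)
    (A : D → B → ℝ) (hA : ∀ d, IsProb (A d)) :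
    DP ε adj A ↔
      ∀ b : B, ∀ d1 d2, adj d1 d2 →
        Lifting ε (fun x1 x2 => x1 = b → x2 = b) (A d1) (A d2) :=
  ⟨fun hdp _ d1 d2 hadj => lifting_of_forall_le (fun _ => id) (hA d1) (hA d2) (hdp d1 d2 hadj),
    fun h d1 d2 hadj b => (h b d1 d2 hadj).apply_le fun _ hy => hy rfl⟩

/-- Pointwise differential privacy via liftings: `A` is ε-DP iff for every output
`b` and adjacent `d1 ∼ d2`, `A d1 (Ψ_b)^ε A d2` where
`Ψ_b = {(x1, x2) | x1 = b → x2 = b}`. -/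
theorem pointwise_dp_iff_lifting {D B : Type*} [Countable B] (ε : ℝ) (hε : 0 ≤ ε)
    (adj : D → D → Prop) (A : D → B → ℝ) (hA : ∀ d, IsProb (A d)) :
    DP ε adj A ↔
      ∀ b : B, ∀ d1 d2, adj d1 d2 →
        Lifting ε (fun x1 x2 => x1 = b → x2 = b) (A d1) (A d2) :=
  pointwise_dp_iff_lifting_general ε adj A hA
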